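/- Let n ≥ 2 and let m = 2m₀ be even with m₀ ≥ 1. Let H be a Hankel tensor of order m and dimension n with parameter vector h ∈ ℂ^{d+1}, d = (n−1)m, let s = d/2 = (n−1)m₀, and let r = rank C_{d−s,s}(h). Suppose either r = s+1, or r < s+1 and there exists a nonzero f = (f_0,…,f_r) ∈ ker C_{d−r,r}(h) whose binary form f(x,y) = f_0 x^r + ⋯ + f_r y^r is squarefree as a homogeneous polynomial in ℂ[x,y]. Then rank_V(H) = rank_S(H) = rank(H) = brank_V(H) = brank_S(H) = brank(H) = r. -/

import Mathlib

open scoped BigOperators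
open MvPolynomial

noncomputable section

/-- An order-`m`, dimension-`n` complex tensor. -/
abbrev Tensor (m n : ℕ) := (Fin m → Fin n) → ℂ

/-- Tensors expressible as a sum of `r` rank-one tensors. -/
def cpSet (m n r : ℕ) : Set (Tensor m n) :=
  {T | ∃ u : Fin r → Fin m → Fin n → ℂ, ∀ i, T i = ∑ k, ∏ j, u k j (i j)}

/-- Tensors expressible as a sum of `r` symmetric rank-one tensors. -/
def symSet (m n r : ℕ) : Set (Tensor m n) :=
  {T | ∃ v : Fin r → Fin n → ℂ, ∀ i, T i = ∑ k, ∏ j, v k (i j)}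

/-- The Vandermonde vector `v(a,b) ∈ ℂ^n`, `v(a,b)_i = a^(n-1-i) * b^i`. -/
def vand (n : ℕ) (a b : ℂ) : Fin n → ℂ := fun i => a ^ (n - 1 - (i : ℕ)) * b ^ (i : ℕ)

/-- Tensors expressible as a sum of `r` Vandermonde rank-one tensors. -/
def vandSet (m n r : ℕ) : Set (Tensor m n) :=
  {T | ∃ ab : Fin r → ℂ × ℂ, ∀ i, T i = ∑ k, ∏ j, vand n (ab k).1 (ab k).2 (i j)}

/-- The cp rank of a tensor. -/
def cpRank {m n : ℕ} (T : Tensor m n) : ℕ := sInf {r | T ∈ cpSet m n r}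

/-- The symmetric rank of a tensor. -/
def symRank {m n : ℕ} (T : Tensor m n) : ℕ := sInf {r | T ∈ symSet m n r}

/-- The Vandermonde rank of a tensor. -/
def vandRank {m n : ℕ} (T : Tensor m n) : ℕ := sInf {r | T ∈ vandSet m n r}

/-- The border rank of a tensor (closure in the product topology). -/
def brank {m n : ℕ} (T : Tensor m n) : ℕ := sInf {r | T ∈ closure (cpSet m n r)}

/-- The symmetric border rank of a tensor. -/
def bSymRank {m n : ℕ} (T : Tensor m n) : ℕ := sInf {r | T ∈ closure (symSet m n r)}

/-- The border Vandermonde rank of a tensor. -/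
def bVandRank {m n : ℕ} (T : Tensor m n) : ℕ := sInf {r | T ∈ closure (vandSet m n r)}

/-- `T` is the Hankel tensor with parameter vector `h ∈ ℂ^{(n-1)m+1}`. -/
def IsHankel {m n : ℕ} (T : Tensor m n) (h : Fin ((n - 1) * m + 1) → ℂ) : Prop :=
  ∀ i : Fin m → Fin n, T i = h ⟨∑ j, (i j : ℕ), by
    have h1 : ∑ j, (i j : ℕ) ≤ ∑ _j : Fin m, (n - 1) :=
      Finset.sum_le_sum fun j _ => Nat.le_pred_of_lt (i j).isLt
    simp only [Finset.sum_const, Finset.card_univ, Fintype.card_fin, smul_eq_mul] at h1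
    exact Nat.lt_succ_of_le (h1.trans (le_of_eq (Nat.mul_comm m (n - 1))))⟩

/-- The `(d-r+1) × (r+1)` Hankel (catalecticant) matrix `C_{d-r,r}(h)` of `h ∈ ℂ^{d+1}`. -/
def hMat (d r : ℕ) (h : Fin (d + 1) → ℂ) : Matrix (Fin (d - r + 1)) (Fin (r + 1)) ℂ :=
  Matrix.of fun i j => if hij : (i : ℕ) + (j : ℕ) < d + 1 then h ⟨(i : ℕ) + (j : ℕ), hij⟩ else 0

/-- The binary form `f(x,y) = f_0 x^r + f_1 x^(r-1) y + ⋯ + f_r y^r`. -/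
def binForm (r : ℕ) (f : Fin (r + 1) → ℂ) : MvPolynomial (Fin 2) ℂ :=
  ∑ j : Fin (r + 1), C (f j) * X 0 ^ (r - (j : ℕ)) * X 1 ^ (j : ℕ)

/-- The binary form `h(x,y) = ∑_j binom(d,j) h_j x^j y^(d-j)` associated with `h ∈ ℂ^{d+1}`. -/
def assocForm (d : ℕ) (h : Fin (d + 1) → ℂ) : MvPolynomial (Fin 2) ℂ :=
  ∑ j : Fin (d + 1), C ((d.choose (j : ℕ) : ℂ) * h j) * X 0 ^ (j : ℕ) * X 1 ^ (d - (j : ℕ))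

/-- Parameter vectors of binary forms of Waring rank at most `r`. -/
def waringSet (d r : ℕ) : Set (Fin (d + 1) → ℂ) :=
  {h | ∃ ab : Fin r → ℂ × ℂ,
    assocForm d h = ∑ i, (C (ab i).1 * X 0 + C (ab i).2 * X 1) ^ d}

/-- The Waring rank of the binary form associated with `h`. -/
def waringRank (d : ℕ) (h : Fin (d + 1) → ℂ) : ℕ := sInf {r | h ∈ waringSet d r}

/-- The border Waring rank of the binary form associated with `h`. -/
def bWaringRank (d : ℕ) (h : Fin (d + 1) → ℂ) : ℕ := sInf {r | h ∈ closure (waringSet d r)}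

/-!
Lower bound: the catalecticant of `h` is a submatrix of the balanced flattening of the Hankel
tensor. A flattening sends a sum of `k` rank-one tensors to a matrix of rank at most `k`, and this
bound survives passing to limits.

Upper bound (Sylvester): a binary form without multiple roots that is apolar to `h` gives a
quadrature rule for the functional `X ^ i ↦ h i` with nodes at its roots, that is, a Vandermonde
decomposition. If the catalecticant of size `s + 1` is nonsingular, the apolar polynomials of degree
at most `s + 1` contain a pencil `p + t q`, with `p` orthogonal of degree `s + 1` and `deg q ≤ s`.
Nonsingularity forbids common roots of `p` and `q`, so a general member has simple roots.
-/

open scoped Polynomial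

section MomentMatrix

variable {R : Type*} [CommSemiring R]

lemma eq_sum_coeff_smul_X_pow {n : ℕ} {g : R[X]} (hg : g.degree < n) :
    g = ∑ i : Fin n, g.coeff i • Polynomial.X ^ (i : ℕ) :=
  calc g = g.sum fun i a => Polynomial.monomial i a := g.sum_monomial_eq.symm
    _ = ∑ i : Fin n, Polynomial.monomial (i : ℕ) (g.coeff i) :=
      (Polynomial.sum_fin _ (fun i => Polynomial.monomial_zero_right i) hg).symm
    _ = _ := by simp only [Polynomial.smul_X_eq_monomial]

variable (L : R[X] →ₗ[R] R)

/-- The Hankel matrix of the moments `L (X ^ k)` of a linear functional on polynomials. -/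
def momentMatrix (p q : ℕ) : Matrix (Fin p) (Fin q) R :=
  Matrix.of fun i j => L (Polynomial.X ^ (i + j : ℕ))

/-- The polynomials apolar to `L` up to order `n`: those `f` for which `L` vanishes on all products
`f * g` with `g` of degree less than `n`. -/
def apolar (n : ℕ) : Submodule R R[X] where
  carrier := {f | ∀ g : R[X], g.degree < n → L (f * g) = 0}
  add_mem' hf₁ hf₂ g hg := by rw [add_mul, map_add, hf₁ g hg, hf₂ g hg, add_zero]
  zero_mem' g _ := by rw [zero_mul, map_zero]
  smul_mem' c f hf g hg := by rw [smul_mul_assoc, map_smul, hf g hg, smul_zero]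

variable {L}

lemma apolar_anti {m n : ℕ} (hmn : m ≤ n) : apolar L n ≤ apolar L m :=
  fun _ hf g hg => hf g (hg.trans_le (Nat.cast_le.2 hmn))

lemma mem_apolar_of_forall_X_pow {n : ℕ} {f : R[X]}
    (hf : ∀ i : Fin n, L (f * Polynomial.X ^ (i : ℕ)) = 0) : f ∈ apolar L n := fun g hg => by
  rw [eq_sum_coeff_smul_X_pow hg, Finset.mul_sum, map_sum]
  exact Finset.sum_eq_zero fun i _ => by rw [mul_smul_comm, map_smul, hf i, smul_zero]

lemma momentMatrix_mulVec_toFn (p : ℕ) {q : ℕ} {f : R[X]} (hf : f.degree < q) :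
    (momentMatrix L p q).mulVec (Polynomial.toFn q f) =
      fun i : Fin p => L (f * Polynomial.X ^ (i : ℕ)) := by
  funext i
  conv_rhs => rw [eq_sum_coeff_smul_X_pow hf, Finset.sum_mul, map_sum]
  rw [Matrix.mulVec, dotProduct]
  refine Finset.sum_congr rfl fun j _ => ?_
  rw [smul_mul_assoc, ← pow_add, map_smul, smul_eq_mul, mul_comm, add_comm (j : ℕ)]
  rfl

lemma mem_apolar_of_momentMatrix_mulVec_eq_zero {p q : ℕ} {f : R[X]} (hf : f.degree < q)
    (h : (momentMatrix L p q).mulVec (Polynomial.toFn q f) = 0) : f ∈ apolar L p := by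
  rw [momentMatrix_mulVec_toFn p hf] at h
  exact mem_apolar_of_forall_X_pow (congrFun h)

lemma exists_degree_lt_toFn_eq {n : ℕ} (v : Fin n → R) :
    ∃ f : R[X], f.degree < n ∧ Polynomial.toFn n f = v := by
  classical
  exact ⟨Polynomial.ofFn n v, Polynomial.ofFn_degree_lt v, Polynomial.toFn_comp_ofFn_eq_id n v⟩

end MomentMatrix

section OrthogonalPolynomials

variable {K : Type*} [Field K] {L : K[X] →ₗ[K] K} {n : ℕ}

lemma exists_ne_zero_mem_apolar (L : K[X] →ₗ[K] K) (n : ℕ) :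
    ∃ q : K[X], q ≠ 0 ∧ q.degree < (n + 1 : ℕ) ∧ q ∈ apolar L n := by
  have hker : LinearMap.ker (momentMatrix L n (n + 1)).mulVecLin ≠ ⊥ :=
    LinearMap.ker_ne_bot_of_finrank_lt (by simp)
  obtain ⟨v, hv, hv0⟩ := Submodule.exists_mem_ne_zero_of_ne_bot hker
  obtain ⟨q, hq, rfl⟩ := exists_degree_lt_toFn_eq v
  exact ⟨q, fun h => hv0 (by rw [h, map_zero]), hq,
    mem_apolar_of_momentMatrix_mulVec_eq_zero hq hv⟩

lemma eq_zero_of_mem_apolar_of_isUnit (hL : IsUnit (momentMatrix L n n)) {g : K[X]}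
    (hdeg : g.degree < n) (hg : g ∈ apolar L n) : g = 0 := by
  have hzero : Polynomial.toFn n g = 0 := by
    refine Matrix.mulVec_injective_iff_isUnit.2 hL ?_
    rw [momentMatrix_mulVec_toFn n hdeg, Matrix.mulVec_zero]
    exact funext fun i =>
      hg _ ((Polynomial.degree_X_pow_le _).trans_lt (Nat.cast_lt.2 i.isLt))
  rw [eq_sum_coeff_smul_X_pow hdeg]
  exact Finset.sum_eq_zero fun i _ => by
    rw [show g.coeff i = 0 from congrFun hzero i, zero_smul]

lemma exists_natDegree_eq_mem_apolar (hL : IsUnit (momentMatrix L n n)) :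
    ∃ p : K[X], p.natDegree = n ∧ p ∈ apolar L n := by
  obtain ⟨v, hv⟩ := Matrix.mulVec_surjective_iff_isUnit.2 hL
    fun i : Fin n => L (Polynomial.X ^ n * Polynomial.X ^ (i : ℕ))
  obtain ⟨g, hg, rfl⟩ := exists_degree_lt_toFn_eq v
  rw [momentMatrix_mulVec_toFn n hg] at hv
  refine ⟨Polynomial.X ^ n - g, ?_,
    mem_apolar_of_forall_X_pow fun i => ?_⟩
  · rw [Polynomial.natDegree_eq_of_degree_eq
      (Polynomial.degree_sub_eq_left_of_degree_lt (by rwa [Polynomial.degree_X_pow])),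
      Polynomial.natDegree_X_pow]
  · rw [sub_mul, map_sub, congrFun hv i, sub_self]

lemma mem_apolar_succ {p q : K[X]} (hp : p.degree = n) (hq : q ∈ apolar L n)
    (hqp : L (q * p) = 0) : q ∈ apolar L (n + 1) := by
  intro g hg
  have hp0 : p.coeff n ≠ 0 := Polynomial.coeff_ne_zero_of_eq_degree hp
  have hdeg : (g - (g.coeff n / p.coeff n) • p).degree < n := by
    rw [Polynomial.degree_lt_iff_coeff_zero]
    intro k hk
    rw [Polynomial.coeff_sub, Polynomial.coeff_smul, smul_eq_mul]
    rcases hk.eq_or_lt with rfl | hlt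
    · rw [div_mul_cancel₀ _ hp0, sub_self]
    · rw [Polynomial.coeff_eq_zero_of_degree_lt (hg.trans_le (Nat.cast_le.2 hlt)),
        Polynomial.coeff_eq_zero_of_degree_lt (hp.trans_lt (Nat.cast_lt.2 hlt)), mul_zero, sub_zero]
  have hsub := hq _ hdeg
  rwa [mul_sub, mul_smul_comm, map_sub, map_smul, hqp, smul_zero, sub_zero] at hsub

/- At a common root `z`, write `p = (X - z) p₁` and `q = (X - z) q₁`, so that `q p₁ = p q₁`. Since
`L (p q₁) = 0` and `p₁` has degree `n`, the polynomial `q` would be apolar to one order more. -/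
lemma eval_ne_zero_of_mem_apolar (hL : IsUnit (momentMatrix L (n + 1) (n + 1))) {p q : K[X]}
    (hp : p.natDegree = n + 1) (hpL : p ∈ apolar L (n + 1)) (hq0 : q ≠ 0)
    (hq : q.degree < (n + 1 : ℕ)) (hqL : q ∈ apolar L n) {z : K} (hpz : p.eval z = 0) :
    q.eval z ≠ 0 := by
  intro hqz
  obtain ⟨p₁, rfl⟩ := Polynomial.dvd_iff_isRoot.2 hpz
  obtain ⟨q₁, rfl⟩ := Polynomial.dvd_iff_isRoot.2 hqz
  have hp₁ : p₁.degree = n := by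
    have hp₁0 : p₁ ≠ 0 := by rintro rfl; simp at hp
    rw [Polynomial.natDegree_mul (Polynomial.X_sub_C_ne_zero z) hp₁0,
      Polynomial.natDegree_X_sub_C] at hp
    rw [Polynomial.degree_eq_natDegree hp₁0, show p₁.natDegree = n by omega]
  have hq₁ : q₁.degree < (n + 1 : ℕ) :=
    (Polynomial.degree_le_mul_left q₁ (Polynomial.X_sub_C_ne_zero z)).trans_lt
      (by rwa [mul_comm])
  have hLqp : L ((Polynomial.X - Polynomial.C z) * q₁ * p₁) = 0 := by
    rw [mul_right_comm]
    exact hpL q₁ hq₁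
  exact hq0 (eq_zero_of_mem_apolar_of_isUnit hL hq (mem_apolar_succ hp₁ hqL hLqp))

/- A multiple root of `p + t q` is a zero of the Wronskian of `p` and `q`, which is not the zero
polynomial; hence only finitely many values of `t` are excluded. -/
lemma exists_separable_add_smul [IsAlgClosed K] [CharZero K] {p q : K[X]} (hpq : IsCoprime p q)
    (hp : p.natDegree ≠ 0) : ∃ t : K, (p + t • q).Separable := by
  classical
  have hW : Polynomial.wronskian p q ≠ 0 := fun h =>
    hp (Polynomial.derivative_eq_zero.1 (hpq.wronskian_eq_zero_iff.1 h).1)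
  obtain ⟨t, ht⟩ := Infinite.exists_notMem_finset
    ((Polynomial.wronskian p q).roots.toFinset.image fun z => -p.eval z / q.eval z)
  refine ⟨t, (Polynomial.isCoprime_iff_aeval_ne_zero_of_isAlgClosed K K _ _).2 fun z => ?_⟩
  by_contra! hz
  simp only [Polynomial.coe_aeval_eq_eval, Polynomial.derivative_add, Polynomial.derivative_smul,
    Polynomial.eval_add, Polynomial.eval_smul, smul_eq_mul] at hz
  obtain ⟨hz, hz'⟩ := hz
  have hqz : q.eval z ≠ 0 := by
    intro hqz
    have := (Polynomial.isCoprime_iff_aeval_ne_zero_of_isAlgClosed K K p q).1 hpq z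
    simp_all
  have hWz : (Polynomial.wronskian p q).eval z = 0 := by
    simp only [Polynomial.wronskian, Polynomial.eval_sub, Polynomial.eval_mul]
    linear_combination q.derivative.eval z * hz - q.eval z * hz'
  refine ht (Finset.mem_image.2 ⟨z, by simpa [hW] using hWz, ?_⟩)
  rw [div_eq_iff hqz]
  linear_combination -hz

lemma exists_separable_mem_apolar [IsAlgClosed K] [CharZero K]
    (hL : IsUnit (momentMatrix L (n + 1) (n + 1))) :
    ∃ f : K[X], f.Separable ∧ f.natDegree = n + 1 ∧ f ∈ apolar L n := by
  obtain ⟨p, hpdeg, hpL⟩ := exists_natDegree_eq_mem_apolar hL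
  obtain ⟨q, hq0, hqdeg, hqL⟩ := exists_ne_zero_mem_apolar L n
  have hpq : IsCoprime p q := by
    refine (Polynomial.isCoprime_iff_aeval_ne_zero_of_isAlgClosed K K p q).2 fun z => ?_
    simp only [Polynomial.coe_aeval_eq_eval]
    exact or_iff_not_imp_left.2 fun hpz =>
      eval_ne_zero_of_mem_apolar hL hpdeg hpL hq0 hqdeg hqL (not_not.1 hpz)
  obtain ⟨t, ht⟩ := exists_separable_add_smul hpq (by omega)
  refine ⟨p + t • q, ht, ?_, add_mem (apolar_anti n.le_succ hpL) (Submodule.smul_mem _ t hqL)⟩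
  rw [Polynomial.natDegree_add_eq_left_of_natDegree_lt, hpdeg]
  exact (Polynomial.natDegree_smul_le t q).trans_lt
    (hpdeg ▸ (Polynomial.natDegree_lt_iff_degree_lt hq0).2 hqdeg)

end OrthogonalPolynomials

section Quadrature

variable {K : Type*} [Field K] {L : K[X] →ₗ[K] K} {n : ℕ} {f : K[X]}

/- Divide `g` by `f`: apolarity kills the quotient part, and the remainder is interpolated at the
roots of `f`. -/
lemma exists_quadrature_of_mem_apolar (hf : f.Separable) (hsplit : f.Splits)
    (hfL : f ∈ apolar L n) : ∃ c z : Fin f.natDegree → K,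
      ∀ g : K[X], g.degree < (f.natDegree + n : ℕ) → L g = ∑ l, c l * g.eval (z l) := by
  classical
  have hf0 : f ≠ 0 := hf.ne_zero
  set S := f.roots.toFinset
  have hcard : S.card = f.natDegree := by
    rw [Multiset.toFinset_card_of_nodup (Polynomial.nodup_roots hf),
      hsplit.natDegree_eq_card_roots]
  let e : Fin f.natDegree ≃ S := (S.equivFinOfCardEq hcard).symm
  refine ⟨fun l => L (Lagrange.basis S id (e l)), fun l => e l, fun g hg => ?_⟩
  have hquot : L (f * (g / f)) = 0 := by
    refine hfL _ ?_
    by_cases hfg : f.degree ≤ g.degree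
    · rw [← Polynomial.degree_add_div hf0 hfg, Polynomial.degree_eq_natDegree hf0,
        Nat.cast_add] at hg
      exact lt_of_add_lt_add_left hg
    · rw [(Polynomial.div_eq_zero_iff hf0).2 (not_le.1 hfg), Polynomial.degree_zero]
      exact WithBot.bot_lt_coe n
  have hrem : g % f = Lagrange.interpolate S id fun z => g.eval z := by
    refine Lagrange.eq_interpolate_of_eval_eq _ Function.injective_id.injOn ?_ fun z hz => ?_
    · rw [hcard, ← Polynomial.degree_eq_natDegree hf0]
      exact EuclideanDomain.mod_lt _ hf0
    · have hfz : f.eval z = 0 := (Polynomial.mem_roots'.1 (Multiset.mem_toFinset.1 hz)).2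
      simpa [hfz] using congrArg (Polynomial.eval z) (EuclideanDomain.div_add_mod g f)
  calc L g = L (g % f) := by
        conv_lhs => rw [← EuclideanDomain.div_add_mod g f, map_add, hquot, zero_add]
    _ = ∑ z : S, L (Lagrange.basis S id z) * g.eval (z : K) := by
        rw [hrem, Lagrange.interpolate_apply, map_sum, ← Finset.sum_coe_sort]
        refine Finset.sum_congr rfl fun z _ => ?_
        rw [← Polynomial.smul_eq_C_mul, map_smul, smul_eq_mul, mul_comm]
    _ = _ := (e.sum_comp _).symm

variable [IsAlgClosed K] {d : ℕ}

lemma exists_forall_pow_mul_pow_eq (hd : 0 < d) (c z : K) :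
    ∃ a b : K, ∀ i ≤ d, a ^ (d - i) * b ^ i = c * z ^ i := by
  obtain ⟨w, rfl⟩ := IsAlgClosed.exists_pow_nat_eq c hd
  refine ⟨w, w * z, fun i hi => ?_⟩
  rw [mul_pow, ← mul_assoc, ← pow_add, Nat.sub_add_cancel hi]

/- When `f` has degree `r - 1`, its missing root lies at infinity: it contributes the point
`(0, w)`, which only affects the top moment. -/
lemma exists_forall_moment_eq_sum_pow_mul_pow (hd : 0 < d) (hf : f.Separable) {r : ℕ}
    (hfr : f.natDegree ≤ r) (hrf : r ≤ f.natDegree + 1)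
    (hfL : f ∈ apolar L (d - r + 1)) :
    ∃ a b : Fin r → K, ∀ i ≤ d, L (Polynomial.X ^ i) = ∑ k, a k ^ (d - i) * b k ^ i := by
  obtain ⟨c, z, hcz⟩ := exists_quadrature_of_mem_apolar hf (IsAlgClosed.splits f) hfL
  choose a b hab using fun k => exists_forall_pow_mul_pow_eq hd (c k) (z k)
  have hmoment : ∀ i < f.natDegree + (d - r + 1),
      L (Polynomial.X ^ i) = ∑ k, c k * z k ^ i := fun i hi => by
    simpa using hcz (Polynomial.X ^ i) (by simpa using mod_cast hi)
  rcases hfr.eq_or_lt with rfl | hlt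
  · refine ⟨a, b, fun i hi => ?_⟩
    rw [hmoment i (by omega)]
    exact Finset.sum_congr rfl fun k _ => (hab k i hi).symm
  · obtain rfl : r = f.natDegree + 1 := by omega
    obtain ⟨w, hw⟩ := IsAlgClosed.exists_pow_nat_eq
      (L (Polynomial.X ^ d) - ∑ k, c k * z k ^ d) hd
    refine ⟨Fin.cons 0 a, Fin.cons w b, fun i hi => ?_⟩
    simp only [Fin.sum_univ_succ, Fin.cons_zero, Fin.cons_succ, hab _ i hi]
    rcases hi.eq_or_lt with rfl | hlt
    · rw [hw, Nat.sub_self, pow_zero, one_mul, sub_add_cancel]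
    · rw [zero_pow (by omega), zero_mul, zero_add, hmoment i (by omega)]

end Quadrature

section MatrixRank

lemma isUnit_of_rank_eq_card {K ι : Type*} [Field K] [Fintype ι] [DecidableEq ι]
    {A : Matrix ι ι K} (hA : A.rank = Fintype.card ι) : IsUnit A := by
  refine Matrix.mulVec_surjective_iff_isUnit.1 (LinearMap.range_eq_top (f := A.mulVecLin).1 ?_)
  exact Submodule.eq_top_of_finrank_eq (hA.trans (Module.finrank_fintype_fun_eq_card K).symm)

lemma isClosed_setOf_rank_le {𝕜 α β : Type*} [NontriviallyNormedField 𝕜] [CompleteSpace 𝕜]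
    [Finite α] [Fintype β] (k : ℕ) : IsClosed {A : Matrix α β 𝕜 | A.rank ≤ k} := by
  classical
  have := Fintype.ofFinite α
  let φ : Matrix α β 𝕜 →ₗ[𝕜] (β → 𝕜) →L[𝕜] α → 𝕜 :=
    LinearMap.toContinuousLinearMap.toLinearMap ∘ₗ Matrix.toLin'.toLinearMap
  have hφ (A : Matrix α β 𝕜) : (φ A : (β → 𝕜) →ₗ[𝕜] α → 𝕜).rank = A.rank :=
    (Module.finrank_eq_rank _ _).symm
  convert ((isOpen_setOfPred_nat_le_rank (k + 1)).preimage
    φ.continuous_of_finiteDimensional).isClosed_compl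
  ext A
  simp only [Set.mem_compl_iff, Set.mem_preimage, Set.mem_ofPred_eq, hφ, Nat.cast_le,
    Nat.succ_le_iff, not_lt]

end MatrixRank

section BinaryForms

lemma squarefree_of_squarefree_map {M N F : Type*} [CommMonoid M] [CommMonoid N] [FunLike F M N]
    [MonoidHomClass F M N] (φ : F) [IsLocalHom φ] {x : M} (hx : Squarefree (φ x)) :
    Squarefree x := fun y hy =>
  IsUnit.of_map φ y (hx (φ y) (by simpa only [map_mul] using map_dvd φ hy))

lemma homogenize_eq_mul_X_pow {R : Type*} [CommSemiring R] {p : R[X]} {r : ℕ}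
    (hr : p.natDegree ≤ r) :
    p.homogenize r = p.homogenize p.natDegree * X 1 ^ (r - p.natDegree) := by
  conv_lhs => rw [← mul_one p, ← Nat.add_sub_of_le hr]
  rw [Polynomial.homogenize_mul p 1 le_rfl (by simp), Polynomial.homogenize_one]

lemma squarefree_of_squarefree_homogenize {R : Type*} [CommRing R] [IsDomain R] {p : R[X]} {r : ℕ}
    (hr : p.natDegree ≤ r) (hp : Squarefree (p.homogenize r)) : Squarefree p := by
  intro g hg
  have hdvd : g.homogenize g.natDegree * g.homogenize g.natDegree ∣ p.homogenize r := by
    rw [homogenize_eq_mul_X_pow hr, ← Polynomial.homogenize_mul g g le_rfl le_rfl,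
      ← two_mul, ← Polynomial.natDegree_pow, pow_two]
    exact (Polynomial.homogenize_dvd hg).mul_right _
  simpa using (hp _ hdvd).map (MvPolynomial.aeval ![Polynomial.X, (1 : R[X])])

lemma le_natDegree_add_one_of_squarefree_homogenize {R : Type*} [CommRing R] [IsDomain R]
    {p : R[X]} {r : ℕ} (hp : Squarefree (p.homogenize r)) : r ≤ p.natDegree + 1 := by
  by_contra! hlt
  have hdvd : (X 1 * X 1 : MvPolynomial (Fin 2) R) ∣ p.homogenize r := by
    rw [homogenize_eq_mul_X_pow (by omega), ← pow_two]
    exact (pow_dvd_pow _ (by omega)).mul_left _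
  exact X_prime.not_isUnit (hp _ hdvd)

lemma binForm_toFn (r : ℕ) (p : ℂ[X]) :
    binForm r (Polynomial.toFn (r + 1) p) = renameEquiv ℂ (Equiv.swap 0 1) (p.homogenize r) := by
  rw [binForm, Polynomial.homogenize, map_sum, Finset.Nat.sum_antidiagonal_eq_sum_range_succ_mk,
    Finset.sum_range]
  refine Finset.sum_congr rfl fun j _ => ?_
  rw [← Polynomial.homogenize_monomial (Nat.le_of_lt_succ j.isLt),
    ← Polynomial.C_mul_X_pow_eq_monomial, Polynomial.homogenize_C_mul,
    Polynomial.homogenize_X_pow (Nat.le_of_lt_succ j.isLt)]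
  simp only [renameEquiv_apply, map_mul, map_pow, rename_C, rename_X, Equiv.swap_apply_left,
    Equiv.swap_apply_right, Polynomial.toFn, LinearMap.pi_apply, Polynomial.lcoeff_apply]
  ring

lemma squarefree_homogenize_of_squarefree_binForm {r : ℕ} {p : ℂ[X]}
    (hp : Squarefree (binForm r (Polynomial.toFn (r + 1) p))) : Squarefree (p.homogenize r) :=
  squarefree_of_squarefree_map (renameEquiv ℂ (Equiv.swap (0 : Fin 2) 1))
    (by rwa [← binForm_toFn])

end BinaryForms

section TensorRanks

variable {m n : ℕ}

lemma vandSet_subset_symSet (r : ℕ) : vandSet m n r ⊆ symSet m n r :=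
  fun _ ⟨ab, hab⟩ => ⟨fun k => vand n (ab k).1 (ab k).2, hab⟩

lemma symSet_subset_cpSet (r : ℕ) : symSet m n r ⊆ cpSet m n r :=
  fun _ ⟨v, hv⟩ => ⟨fun k _ => v k, hv⟩

lemma ranks_eq_of_mem_vandSet {r : ℕ} {H : Tensor m n} (hvand : H ∈ vandSet m n r)
    (hlow : ∀ k, H ∈ closure (cpSet m n k) → r ≤ k) :
    vandRank H = r ∧ symRank H = r ∧ cpRank H = r ∧
      bVandRank H = r ∧ bSymRank H = r ∧ brank H = r := by
  have hsym := vandSet_subset_symSet r hvand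
  have hcp := symSet_subset_cpSet r hsym
  have hrank (S : ℕ → Set (Tensor m n)) (hS : ∀ k, S k ⊆ cpSet m n k) (hr : H ∈ S r) :
      sInf {k | H ∈ S k} = r ∧ sInf {k | H ∈ closure (S k)} = r :=
    ⟨IsLeast.csInf_eq ⟨hr, fun k hk => hlow k (subset_closure (hS k hk))⟩,
      IsLeast.csInf_eq ⟨subset_closure hr, fun k hk => hlow k (closure_mono (hS k) hk)⟩⟩
  obtain ⟨hV, hbV⟩ := hrank (vandSet m n)
    (fun k => (vandSet_subset_symSet k).trans (symSet_subset_cpSet k)) hvand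
  obtain ⟨hS, hbS⟩ := hrank (symSet m n) symSet_subset_cpSet hsym
  obtain ⟨hC, hbC⟩ := hrank (cpSet m n) (fun _ => subset_rfl) hcp
  exact ⟨hV, hS, hC, hbV, hbS, hbC⟩

/-- The matrix of a tensor whose modes are split into row modes `Fin p` and column modes `Fin q`. -/
def flattening {p q : ℕ} (e : Fin p ⊕ Fin q ≃ Fin m) :
    Tensor m n →ₗ[ℂ] Matrix (Fin p → Fin n) (Fin q → Fin n) ℂ where
  toFun T := Matrix.of fun a b => T (Sum.elim a b ∘ e.symm)
  map_add' _ _ := rfl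
  map_smul' _ _ := rfl

variable {p q k : ℕ} (e : Fin p ⊕ Fin q ≃ Fin m) {T : Tensor m n}

lemma flattening_apply (T : Tensor m n) (a : Fin p → Fin n) (b : Fin q → Fin n) :
    flattening e T a b = T (Sum.elim a b ∘ e.symm) :=
  rfl

lemma rank_flattening_le_of_mem_cpSet (hT : T ∈ cpSet m n k) : (flattening e T).rank ≤ k := by
  obtain ⟨u, hu⟩ := hT
  have hmul : flattening e T =
      (Matrix.of fun a l => ∏ j, u l (e (.inl j)) (a j) : Matrix (Fin p → Fin n) (Fin k) ℂ) *
      (Matrix.of fun l b => ∏ j, u l (e (.inr j)) (b j) : Matrix (Fin k) (Fin q → Fin n) ℂ) := by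
    ext a b
    simp only [flattening_apply, hu, Matrix.mul_apply, Matrix.of_apply, ← e.prod_comp,
      Fintype.prod_sum_type, Function.comp_apply, Equiv.symm_apply_apply, Sum.elim_inl,
      Sum.elim_inr]
  rw [hmul]
  exact (Matrix.rank_mul_le_left _ _).trans
    ((Matrix.rank_le_card_width _).trans_eq (Fintype.card_fin k))

lemma rank_flattening_le_of_mem_closure (hT : T ∈ closure (cpSet m n k)) :
    (flattening e T).rank ≤ k :=
  closure_minimal (fun _ => rank_flattening_le_of_mem_cpSet e)
    ((isClosed_setOf_rank_le k).preimage (flattening e).continuous_of_finiteDimensional) hT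

end TensorRanks

section HankelTensors

/-- The functional on polynomials sending `X ^ i` to `h i` for `i ≤ d`, and to `0` for `i > d`. -/
def momentFunctional {R : Type*} [CommSemiring R] {d : ℕ} (h : Fin (d + 1) → R) : R[X] →ₗ[R] R :=
  ∑ j, h j • Polynomial.lcoeff R j

lemma momentFunctional_X_pow {R : Type*} [CommSemiring R] {d : ℕ} (h : Fin (d + 1) → R) (i : ℕ) :
    momentFunctional h (Polynomial.X ^ i) = if hi : i < d + 1 then h ⟨i, hi⟩ else 0 := by
  simp only [momentFunctional, LinearMap.sum_apply, LinearMap.smul_apply, Polynomial.lcoeff_apply,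
    Polynomial.coeff_X_pow, smul_eq_mul, mul_ite, mul_one, mul_zero]
  split_ifs with hi
  · rw [Finset.sum_eq_single ⟨i, hi⟩ (fun j _ hj => if_neg fun h => hj (Fin.ext h)) (by simp),
      if_pos rfl]
  · exact Finset.sum_eq_zero fun j _ => if_neg (by omega)

lemma hMat_eq_momentMatrix (d r : ℕ) (h : Fin (d + 1) → ℂ) :
    hMat d r h = momentMatrix (momentFunctional h) (d - r + 1) (r + 1) := by
  ext i j
  exact (momentFunctional_X_pow h _).symm

variable {m n : ℕ}

lemma sum_val_le (i : Fin m → Fin n) : ∑ j, (i j : ℕ) ≤ (n - 1) * m :=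
  (Finset.sum_le_card_nsmul _ _ (n - 1) fun j _ => Nat.le_pred_of_lt (i j).isLt).trans_eq
    (by simp [mul_comm])

lemma exists_sum_val_eq [NeZero n] {a : ℕ} (ha : a ≤ (n - 1) * m) :
    ∃ i : Fin m → Fin n, ∑ j, (i j : ℕ) = a := by
  have hn := NeZero.pos n
  induction m generalizing a with
  | zero => exact ⟨Fin.elim0, by simpa using (Nat.le_zero.1 ha).symm⟩
  | succ m ih =>
    obtain ⟨i, hi⟩ := ih (a := a - min a (n - 1)) (by rw [Nat.mul_succ] at ha; omega)
    refine ⟨Fin.cons ⟨min a (n - 1), by omega⟩ i, ?_⟩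
    simp only [Fin.sum_univ_succ, Fin.cons_zero, Fin.cons_succ, hi]
    omega

lemma prod_vand (a b : ℂ) (i : Fin m → Fin n) :
    ∏ j, vand n a b (i j) = a ^ ((n - 1) * m - ∑ j, (i j : ℕ)) * b ^ ∑ j, (i j : ℕ) := by
  simp only [vand, Finset.prod_mul_distrib, Finset.prod_pow_eq_pow_sum]
  congr 2
  rw [Finset.sum_tsub_distrib _ fun j _ => Nat.le_sub_one_of_lt (i j).isLt]
  simp [mul_comm]

namespace IsHankel

variable {H : Tensor m n} {h : Fin ((n - 1) * m + 1) → ℂ}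

lemma apply_eq_momentFunctional (hH : IsHankel H h) (i : Fin m → Fin n) :
    H i = momentFunctional h (Polynomial.X ^ ∑ j, (i j : ℕ)) := by
  rw [hH i, momentFunctional_X_pow, dif_pos (Nat.lt_succ_of_le (sum_val_le i))]

lemma mem_vandSet_of_forall_moment_eq (hH : IsHankel H h) {r : ℕ} {a b : Fin r → ℂ}
    (hab : ∀ i ≤ (n - 1) * m, momentFunctional h (Polynomial.X ^ i) =
      ∑ k, a k ^ ((n - 1) * m - i) * b k ^ i) : H ∈ vandSet m n r := by
  refine ⟨fun k => (a k, b k), fun i => ?_⟩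
  rw [hH.apply_eq_momentFunctional, hab _ (sum_val_le i)]
  exact Finset.sum_congr rfl fun k _ => (prod_vand _ _ i).symm

lemma mem_vandSet_of_rank_eq (hH : IsHankel H h) {s : ℕ} (hs : 0 < s) (hds : (n - 1) * m = 2 * s)
    (hrank : (hMat ((n - 1) * m) s h).rank = s + 1) : H ∈ vandSet m n (s + 1) := by
  have hds' : (n - 1) * m - s = s := by omega
  rw [hMat_eq_momentMatrix, hds'] at hrank
  obtain ⟨f, hf, hfdeg, hfL⟩ :=
    exists_separable_mem_apolar (isUnit_of_rank_eq_card (hrank.trans (Fintype.card_fin _).symm))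
  obtain ⟨a, b, hab⟩ := exists_forall_moment_eq_sum_pow_mul_pow (d := (n - 1) * m) (r := s + 1)
    (by omega) hf hfdeg.le (by omega) (by
      rwa [show (n - 1) * m - (s + 1) + 1 = s by omega])
  exact hH.mem_vandSet_of_forall_moment_eq hab

lemma mem_vandSet_of_squarefree (hH : IsHankel H h) (hd : 0 < (n - 1) * m) {r : ℕ}
    {f : Fin (r + 1) → ℂ} (hf : (hMat ((n - 1) * m) r h).mulVec f = 0)
    (hsq : Squarefree (binForm r f)) : H ∈ vandSet m n r := by
  obtain ⟨p, hp, rfl⟩ := exists_degree_lt_toFn_eq f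
  have hpr : p.natDegree ≤ r :=
    Polynomial.natDegree_le_iff_coeff_eq_zero.2
      ((Polynomial.degree_lt_iff_coeff_zero p (r + 1)).1 hp)
  rw [hMat_eq_momentMatrix] at hf
  have hsq' := squarefree_homogenize_of_squarefree_binForm hsq
  obtain ⟨a, b, hab⟩ := exists_forall_moment_eq_sum_pow_mul_pow hd
    (PerfectField.separable_iff_squarefree.2 (squarefree_of_squarefree_homogenize hpr hsq')) hpr
    (le_natDegree_add_one_of_squarefree_homogenize hsq')
    (mem_apolar_of_momentMatrix_mulVec_eq_zero hp hf)
  exact hH.mem_vandSet_of_forall_moment_eq hab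

lemma rank_hMat_le_rank_flattening [NeZero n] (hH : IsHankel H h) {p q : ℕ}
    (e : Fin p ⊕ Fin q ≃ Fin m) :
    (hMat ((n - 1) * m) ((n - 1) * q) h).rank ≤ (flattening e H).rank := by
  have hd : (n - 1) * m = (n - 1) * p + (n - 1) * q := by
    rw [← mul_add, show p + q = m by simpa using Fintype.card_congr e]
  choose a ha using fun x : Fin ((n - 1) * m - (n - 1) * q + 1) =>
    exists_sum_val_eq (n := n) (m := p) (a := x) (by omega)
  choose b hb using fun y : Fin ((n - 1) * q + 1) =>
    exists_sum_val_eq (n := n) (m := q) (a := y) (by omega)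
  have hsub : hMat ((n - 1) * m) ((n - 1) * q) h = (flattening e H).submatrix a b := by
    ext x y
    have hsum : ∑ j, ((Sum.elim (a x) (b y) (e.symm j) : Fin n) : ℕ) = x + y := by
      rw [e.symm.sum_comp fun j => ((Sum.elim (a x) (b y) j : Fin n) : ℕ)]
      simp [ha, hb]
    rw [hMat_eq_momentMatrix, Matrix.submatrix_apply, flattening_apply,
      hH.apply_eq_momentFunctional]
    exact congrArg (fun k => momentFunctional h (Polynomial.X ^ k)) hsum.symm
  rw [hsub]
  exact Matrix.rank_submatrix_le _ _ _

end IsHankel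

end HankelTensors

/-- Even order: if `r = s+1` or the kernel form is squarefree, then
all six ranks of the Hankel tensor equal `r`. -/
theorem stmt_8 (n m₀ : ℕ) (hn : 2 ≤ n) (hm : 1 ≤ m₀)
    (H : Tensor (2 * m₀) n) (h : Fin ((n - 1) * (2 * m₀) + 1) → ℂ) (hH : IsHankel H h)
    (r : ℕ) (hr : r = (hMat ((n - 1) * (2 * m₀)) ((n - 1) * m₀) h).rank)
    (hyp : r = (n - 1) * m₀ + 1 ∨
      (r < (n - 1) * m₀ + 1 ∧ ∃ f : Fin (r + 1) → ℂ, f ≠ 0 ∧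
        (hMat ((n - 1) * (2 * m₀)) r h).mulVec f = 0 ∧ Squarefree (binForm r f))) :
    vandRank H = r ∧ symRank H = r ∧ cpRank H = r ∧
      bVandRank H = r ∧ bSymRank H = r ∧ brank H = r := by
  have : NeZero n := ⟨by omega⟩
  have hs : 0 < (n - 1) * m₀ := Nat.mul_pos (by omega) hm
  have hd : (n - 1) * (2 * m₀) = 2 * ((n - 1) * m₀) := by ring
  refine ranks_eq_of_mem_vandSet ?upper fun k hk => ?lower
  case upper =>
    rcases hyp with hfull | ⟨-, f, -, hker, hsq⟩
    · rw [hfull]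
      exact hH.mem_vandSet_of_rank_eq hs hd (hr.symm.trans hfull)
    · exact hH.mem_vandSet_of_squarefree (by omega) hker hsq
  case lower =>
    let e : Fin m₀ ⊕ Fin m₀ ≃ Fin (2 * m₀) :=
      finSumFinEquiv.trans (finCongr (two_mul m₀).symm)
    calc r = (hMat ((n - 1) * (2 * m₀)) ((n - 1) * m₀) h).rank := hr
      _ ≤ (flattening e H).rank := hH.rank_hMat_le_rank_flattening e
      _ ≤ k := rank_flattening_le_of_mem_closure e hk
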